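/- arXiv:2008.13194 — 4 statements merged into one kernel-verified Lean document; each statement's English description precedes it below -/
import Mathlib

section
/- (Leinartas' decomposition.) Let K be a field, d ≥ 1, and let f, g ∈ K[x_1,…,x_d] with g ≠ 0. Let g = c·∏_{i=1}^m q_i^{e_i} be the factorization of g into pairwise non-associate irreducible polynomials q_i with exponents e_i ≥ 1 and a unit c ∈ K. Then there exist, for every subset S ⊆ {1,…,m}, a polynomial f_S ∈ K[x_1,…,x_d] and positive integers b_{S,i} for i ∈ S, such that in K(x_1,…,x_d) one has f/g = Σ_{S ⊆ {1,…,m}} f_S / ∏_{i∈S} q_i^{b_{S,i}}, and every subset S with f_S ≠ 0 satisfies: (1) the polynomials {q_i | i ∈ S} have a common zero in K̄^d; and (2) the family (q_i)_{i∈S} is algebraically independent over K. -/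
open MvPolynomial

/-- A family `q : σ → K[x_1,…,x_d]` of polynomials is *algebraically dependent* over `K`
if there is a nonzero polynomial `p ∈ K[y_i : i ∈ σ]` with `p(q) = 0`. -/
def AlgebraicallyDependent (K : Type*) [Field K] {d : ℕ} {σ : Type*}
    (q : σ → MvPolynomial (Fin d) K) : Prop :=
  ∃ p : MvPolynomial σ K, p ≠ 0 ∧ MvPolynomial.aeval q p = 0

/-- The canonical map from `K[x_1,…,x_d]` into its field of fractions `K(x_1,…,x_d)`. -/
noncomputable def toFrac (K : Type*) [Field K] (d : ℕ) :
    MvPolynomial (Fin d) K →+* FractionRing (MvPolynomial (Fin d) K) :=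
  algebraMap (MvPolynomial (Fin d) K) (FractionRing (MvPolynomial (Fin d) K))

/-!
Write `f / g` with denominator a power of `∏ i ∈ S, q i`. Suppose that for every `n > 0` there is
an identity `∏ q_i ^ μ_i = ∑ h_i * q_i ^ (μ_i + n)` over `i ∈ S`. Divided by `∏ q_i ^ (μ_i + n)`,
it expresses `1 / ∏ q_i ^ n` as a sum of fractions whose denominators each omit one of the `q_i`,
so the fraction splits into fractions on proper subsets of `S`, and induction on `S` applies.
Such identities exist in two cases. If the `q_i` have no common zero, the Nullstellensatz gives one
with `μ = 0`. If the `q_i` are algebraically dependent, then so are the `q_i ^ n`, and one isolates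
a minimal monomial in a polynomial relation between these powers: every other monomial has a larger
exponent somewhere.
-/

section SplittingRelations

variable {R ι : Type*} [CommSemiring R]

/-- The family `q` has *splitting relations* on `S` if for each `n > 0` some monomial
`∏ i ∈ S, q i ^ μ i` lies in the ideal generated by the powers `q i ^ (μ i + n)`, `i ∈ S`. These
relations split a fraction with denominator `∏ i ∈ S, q i ^ n` into fractions with fewer `q i` in
the denominator. -/
def HasSplittingRelations (q : ι → R) (S : Finset ι) : Prop :=
  ∀ n > 0, ∃ μ : ι → ℕ,
    ∏ i ∈ S, q i ^ μ i ∈ Ideal.span (Set.range fun i : S ↦ q i ^ (μ i + n))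

theorem hasSplittingRelations_of_subtype {q : ι → R} {S : Finset ι}
    (h : ∀ n > 0, ∃ μ : S → ℕ,
      ∏ i : S, q i ^ μ i ∈ Ideal.span (Set.range fun i : S ↦ q i ^ (μ i + n))) :
    HasSplittingRelations q S := by
  intro n hn
  obtain ⟨μ', hμ⟩ := h n hn
  obtain ⟨μ, rfl⟩ := Subtype.val_injective.surjective_comp_right μ'
  exact ⟨μ, by rwa [← Finset.prod_coe_sort]⟩

theorem hasSplittingRelations_of_span_eq_top {q : ι → R} {S : Finset ι}
    (h : Ideal.span (Set.range fun i : S ↦ q i) = ⊤) : HasSplittingRelations q S := by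
  intro n _
  have hpow := Ideal.span_pow_eq_top _ h n
  rw [← Set.range_comp] at hpow
  refine ⟨0, ?_⟩
  simp only [Pi.zero_apply, zero_add]
  exact hpow ▸ Submodule.mem_top

end SplittingRelations

section AlgebraicDependence

theorem isIntegral_expand {R σ : Type*} [CommRing R] {n : ℕ} (hn : 0 < n) :
    (expand n : MvPolynomial σ R →ₐ[R] MvPolynomial σ R).toRingHom.IsIntegral := by
  intro p
  induction p using MvPolynomial.induction_on with
  | C a => simpa using RingHom.isIntegralElem_map (expand n).toRingHom (x := C a)
  | add p q hp hq => exact hp.add _ hq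
  | mul_X p i hp =>
    have hX : (expand n).toRingHom.IsIntegralElem (X i : MvPolynomial σ R) :=
      ⟨Polynomial.X ^ n - Polynomial.C (X i), Polynomial.monic_X_pow_sub_C _ hn.ne', by simp⟩
    exact hp.mul _ hX

theorem algebraicIndependent_of_pow {R A ι : Type*} [CommRing R] [IsDomain R] [CommRing A]
    [Algebra R A] {x : ι → A} {n : ℕ} (hn : 0 < n) (hx : AlgebraicIndependent R (x ^ n)) :
    AlgebraicIndependent R x := by
  -- The polynomial ring is integral over the subring `R[y_i ^ n]`, so the relation ideal of `x`
  -- meets that subring nontrivially, and a relation in it is a relation between the `x_i ^ n`.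
  refine algebraicIndependent_iff.2 fun p hp ↦ by_contra fun hp0 ↦ ?_
  obtain ⟨P, hP, hPp⟩ := isIntegral_expand hn p
  obtain ⟨r, hr, hr0⟩ := Submodule.exists_mem_ne_zero_of_ne_bot <|
    Ideal.comap_ne_bot_of_root_mem (I := RingHom.ker (aeval (R := R) x)) hp0 hp hP.ne_zero hPp
  exact hr0 (algebraicIndependent_iff.1 hx r ((aeval_expand n x r).symm.trans hr))

theorem exists_prod_pow_mem_span_pow_succ {K A ι : Type*} [Field K] [CommRing A] [Algebra K A]
    [Fintype ι] {x : ι → A} (hx : ¬ AlgebraicIndependent K x) :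
    ∃ μ : ι → ℕ, ∏ i, x i ^ μ i ∈ Ideal.span (Set.range fun i ↦ x i ^ (μ i + 1)) := by
  classical
  rw [algebraicIndependent_iff] at hx
  push Not at hx
  obtain ⟨p, hpx, hp⟩ := hx
  obtain ⟨μ, hμ⟩ := p.support.exists_minimal (support_nonempty.2 hp)
  refine ⟨μ, ?_⟩
  set I := Ideal.span (Set.range fun i ↦ x i ^ (μ i + 1))
  have mem_of_ne : ∀ ν ∈ p.support.erase μ, algebraMap K A (coeff ν p) * ∏ i, x i ^ ν i ∈ I := by
    intro ν hν
    obtain ⟨hne, hν⟩ := Finset.mem_erase.1 hν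
    obtain ⟨i, hi⟩ : ∃ i, μ i < ν i := by
      by_contra! hle
      exact hne (hμ.eq_of_le hν hle)
    have hdvd : x i ^ (μ i + 1) ∣ ∏ j, x j ^ ν j :=
      (pow_dvd_pow _ hi).trans (Finset.dvd_prod_of_mem _ (Finset.mem_univ i))
    exact I.mul_mem_left _ (I.mem_of_dvd hdvd (Ideal.subset_span ⟨i, rfl⟩))
  rw [aeval_def, eval₂_eq', ← Finset.add_sum_erase _ _ hμ.prop] at hpx
  have hmem : algebraMap K A (coeff μ p) * ∏ i, x i ^ μ i ∈ I :=
    eq_neg_of_add_eq_zero_left hpx ▸ neg_mem (sum_mem mem_of_ne)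
  have hunit : IsUnit (algebraMap K A (coeff μ p)) :=
    (mem_support_iff.1 hμ.prop).isUnit.map (algebraMap K A)
  exact (I.unit_mul_mem_iff_mem hunit).1 hmem

theorem hasSplittingRelations_of_not_algebraicIndependent {K A ι : Type*} [Field K] [CommRing A]
    [Algebra K A] {q : ι → A} {S : Finset ι} (hq : ¬ AlgebraicIndependent K fun i : S ↦ q i) :
    HasSplittingRelations q S := by
  refine hasSplittingRelations_of_subtype fun n hn ↦ ?_
  obtain ⟨μ, hμ⟩ := exists_prod_pow_mem_span_pow_succ (mt (algebraicIndependent_of_pow hn) hq)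
  refine ⟨fun i ↦ n * μ i, ?_⟩
  simpa only [Pi.pow_apply, ← pow_mul, mul_add, mul_one] using hμ

end AlgebraicDependence

section Nullstellensatz

variable {K σ : Type*} (E : Type*) [Field K] [Finite σ] [Field E] [IsAlgClosed E] [Algebra K E]

theorem eq_top_of_zeroLocus_eq_empty {I : Ideal (MvPolynomial σ K)} (hI : zeroLocus E I = ∅) :
    I = ⊤ := by
  rw [← Ideal.radical_eq_top, ← vanishingIdeal_zeroLocus_eq_radical (K := E), hI,
    vanishingIdeal_empty]

theorem hasSplittingRelations_of_not_exists_common_zero {ι : Type*} {q : ι → MvPolynomial σ K}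
    {S : Finset ι} (hq : ¬ ∃ a : σ → E, ∀ i ∈ S, aeval a (q i) = 0) :
    HasSplittingRelations q S := by
  refine hasSplittingRelations_of_span_eq_top (eq_top_of_zeroLocus_eq_empty E ?_)
  rw [zeroLocus_span, Set.eq_empty_iff_forall_notMem]
  exact fun a ha ↦ hq ⟨a, fun i hi ↦ ha _ ⟨⟨i, hi⟩, rfl⟩⟩

end Nullstellensatz

section Fractions

theorem prod_pow_dvd_prod_pow_sum {M ι : Type*} [CommMonoid M] (q : ι → M) (S : Finset ι)
    (b : ι → ℕ) :
    ∏ i ∈ S, q i ^ b i ∣ (∏ i ∈ S, q i) ^ ∑ i ∈ S, b i := by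
  rw [← Finset.prod_pow]
  exact Finset.prod_dvd_prod_of_dvd _ _ fun i hi ↦
    pow_dvd_pow _ (Finset.single_le_sum_of_canonicallyOrdered hi)

variable {R ι : Type*} [CommRing R] [IsDomain R]
  (L : Type*) [Field L] [Algebra R L] [IsFractionRing R L] {q : ι → R} (hq : ∀ i, q i ≠ 0)

/-- The `R`-submodule of `L = Frac R` of the fractions whose denominator is a power of
`∏ i ∈ S, q i`, that is, the localization of `R` away from the `q i` with `i ∈ S`. -/
noncomputable def fractionsOver (S : Finset ι) : Submodule R L :=
  (Localization.subalgebra.ofField L (Submonoid.powers (∏ i ∈ S, q i))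
    (powers_le_nonZeroDivisors_of_noZeroDivisors
      (Finset.prod_ne_zero_iff.2 fun i _ ↦ hq i))).toSubmodule

variable {L} {S : Finset ι}

theorem div_mem_fractionsOver {s : R} {n : ℕ} (hs : s ∣ (∏ i ∈ S, q i) ^ n) (a : R) :
    algebraMap R L a / algebraMap R L s ∈ fractionsOver L hq S := by
  obtain ⟨t, ht⟩ := hs
  have hst : algebraMap R L (s * t) ≠ 0 := by
    rw [← ht, map_ne_zero_iff _ (IsFractionRing.injective R L)]
    exact pow_ne_zero _ (Finset.prod_ne_zero_iff.2 fun i _ ↦ hq i)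
  refine ⟨a * t, s * t, ⟨n, ht⟩, ?_⟩
  rw [map_mul] at hst
  rw [map_mul, map_mul, ← div_eq_mul_inv, mul_div_mul_right _ _ (right_ne_zero_of_mul hst)]

theorem exists_eq_div_of_mem_fractionsOver {x : L} (hx : x ∈ fractionsOver L hq S) :
    ∃ (a : R) (n : ℕ), 0 < n ∧ x = algebraMap R L a / ∏ i ∈ S, algebraMap R L (q i) ^ n := by
  obtain ⟨a, _, ⟨n, rfl⟩, rfl⟩ := hx
  have hprod : algebraMap R L (∏ i ∈ S, q i) ≠ 0 := by
    rw [map_ne_zero_iff _ (IsFractionRing.injective R L)]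
    exact Finset.prod_ne_zero_iff.2 fun i _ ↦ hq i
  refine ⟨a * ∏ i ∈ S, q i, n + 1, n.succ_pos, ?_⟩
  rw [Finset.prod_pow, ← map_prod, map_mul, map_pow, pow_succ, mul_div_mul_right _ _ hprod,
    div_eq_mul_inv]

theorem fractionsOver_le_iSup_erase [DecidableEq ι] (hS : HasSplittingRelations q S) :
    fractionsOver L hq S ≤ ⨆ i ∈ S, fractionsOver L hq (S.erase i) := by
  intro x hx
  obtain ⟨a, n, hn, rfl⟩ := exists_eq_div_of_mem_fractionsOver hq hx
  obtain ⟨μ, hμ⟩ := hS n hn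
  set N := ⨆ i ∈ S, fractionsOver L hq (S.erase i)
  have hq' (i : ι) : algebraMap R L (q i) ≠ 0 :=
    (map_ne_zero_iff _ (IsFractionRing.injective R L)).2 (hq i)
  let D := ∏ i ∈ S, algebraMap R L (q i) ^ (μ i + n)
  have span_le : Ideal.span (Set.range fun i : S ↦ q i ^ (μ i + n)) ≤
      N.comap (LinearMap.toSpanSingleton R L D⁻¹) := by
    refine Submodule.span_le.2 ?_
    rintro _ ⟨⟨i, hi⟩, rfl⟩
    have hcancel : q i ^ (μ i + n) • D⁻¹ =
        algebraMap R L 1 / algebraMap R L (∏ j ∈ S.erase i, q j ^ (μ j + n)) := by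
      have hpow := pow_ne_zero (μ i + n) (hq' i)
      simp only [D, ← Finset.mul_prod_erase S _ hi, Algebra.smul_def, map_pow, map_prod, map_one,
        mul_inv, mul_inv_cancel_left₀ hpow, one_div]
    change q i ^ (μ i + n) • D⁻¹ ∈ N
    rw [hcancel]
    exact Submodule.mem_iSup_of_mem i <| Submodule.mem_iSup_of_mem hi <|
      div_mem_fractionsOver hq (prod_pow_dvd_prod_pow_sum q _ _) 1
  have hx_eq : algebraMap R L a / ∏ i ∈ S, algebraMap R L (q i) ^ n =
      a • (∏ i ∈ S, q i ^ μ i) • D⁻¹ := by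
    have hpow : ∏ i ∈ S, algebraMap R L (q i) ^ μ i ≠ 0 :=
      Finset.prod_ne_zero_iff.2 fun i _ ↦ pow_ne_zero _ (hq' i)
    simp only [D, pow_add, Finset.prod_mul_distrib, Algebra.smul_def, map_prod, map_pow, mul_inv,
      mul_inv_cancel_left₀ hpow, div_eq_mul_inv]
  rw [hx_eq]
  exact N.smul_mem a (span_le hμ)

theorem fractionsOver_le_iSup_not_hasSplittingRelations (S : Finset ι) :
    fractionsOver L hq S ≤
      ⨆ (T : Finset ι) (_ : ¬ HasSplittingRelations q T), fractionsOver L hq T := by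
  classical
  induction S using Finset.strongInduction with
  | H S ih =>
    by_cases hS : HasSplittingRelations q S
    · exact (fractionsOver_le_iSup_erase hq hS).trans
        (iSup₂_le fun i hi ↦ ih _ (Finset.erase_ssubset hi))
    · exact le_iSup₂_of_le S hS le_rfl

include hq in
theorem exists_div_eq_sum_not_hasSplittingRelations [Fintype ι] (f : R) {g : R} {e : ι → ℕ}
    (hg : g ∣ ∏ i, q i ^ e i) :
    ∃ (F : Finset ι → R) (n : Finset ι → ℕ), (∀ S, 0 < n S) ∧
      algebraMap R L f / algebraMap R L g =
        ∑ S, algebraMap R L (F S) / ∏ i ∈ S, algebraMap R L (q i) ^ n S ∧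
      ∀ S, F S ≠ 0 → ¬ HasSplittingRelations q S := by
  classical
  have hmem : algebraMap R L f / algebraMap R L g ∈
      ⨆ T ∈ Finset.univ.filter (¬ HasSplittingRelations q ·), fractionsOver L hq T := by
    simpa only [Finset.mem_filter_univ] using
      fractionsOver_le_iSup_not_hasSplittingRelations hq _ <|
        div_mem_fractionsOver hq (hg.trans (prod_pow_dvd_prod_pow_sum q _ e)) f
  obtain ⟨x, hx⟩ := (Submodule.mem_iSup_finset_iff_exists_sum _ _).1 hmem
  choose a n hn hxa using fun S ↦ exists_eq_div_of_mem_fractionsOver hq (x S).2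
  refine ⟨fun S ↦ if HasSplittingRelations q S then 0 else a S, n, hn, ?_, fun S hS ↦ ?_⟩
  · rw [← hx, Finset.sum_filter]
    refine Finset.sum_congr rfl fun S _ ↦ ?_
    by_cases hS : HasSplittingRelations q S <;> simp [hS, hxa S]
  · exact fun h ↦ hS (if_pos h)

end Fractions

theorem not_algebraicallyDependent_iff {K σ : Type*} [Field K] {d : ℕ}
    {q : σ → MvPolynomial (Fin d) K} :
    ¬ AlgebraicallyDependent K q ↔ AlgebraicIndependent K q := by
  simp only [AlgebraicallyDependent, algebraicIndependent_iff, not_exists, not_and, not_imp_not,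
    ne_eq]

theorem leinartas_decomposition_general {K σ ι : Type*} (E L : Type*) [Field K] [Finite σ]
    [Fintype ι] [Field E] [IsAlgClosed E] [Algebra K E] [Field L] [Algebra (MvPolynomial σ K) L]
    [IsFractionRing (MvPolynomial σ K) L] (f : MvPolynomial σ K) {g : MvPolynomial σ K}
    {q : ι → MvPolynomial σ K} (hq : ∀ i, q i ≠ 0) {e : ι → ℕ} (hg : g ∣ ∏ i, q i ^ e i) :
    ∃ (F : Finset ι → MvPolynomial σ K) (b : Finset ι → ι → ℕ),
      (∀ S, ∀ i ∈ S, 0 < b S i) ∧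
      algebraMap (MvPolynomial σ K) L f / algebraMap (MvPolynomial σ K) L g =
        ∑ S, algebraMap (MvPolynomial σ K) L (F S) /
          ∏ i ∈ S, algebraMap (MvPolynomial σ K) L (q i) ^ b S i ∧
      ∀ S, F S ≠ 0 →
        (∃ a : σ → E, ∀ i ∈ S, aeval a (q i) = 0) ∧
        AlgebraicIndependent K fun i : S ↦ q i := by
  obtain ⟨F, n, hn, hsum, hF⟩ :=
    exists_div_eq_sum_not_hasSplittingRelations (L := L) hq f hg
  exact ⟨F, fun S _ ↦ n S, fun S _ _ ↦ hn S, hsum, fun S hS ↦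
    ⟨not_imp_comm.1 (hasSplittingRelations_of_not_exists_common_zero E) (hF S hS),
      not_imp_comm.1 hasSplittingRelations_of_not_algebraicIndependent (hF S hS)⟩⟩

/-- **Leinartas' decomposition.** Let `f, g ∈ K[x_1,…,x_d]` (`d ≥ 1`) with `g ≠ 0`, and let
`g = c·∏ q_i^{e_i}` be the factorization of `g` into pairwise non-associate irreducible
polynomials `q_i` with exponents `e_i ≥ 1` and a unit `c ∈ K`.  Then there is a decomposition
`f/g = ∑_{S ⊆ {1,…,m}} f_S / ∏_{i ∈ S} q_i^{b_{S,i}}` in `K(x_1,…,x_d)`, with `b_{S,i} ≥ 1`,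
such that every `S` with `f_S ≠ 0` satisfies: (1) the `q_i`, `i ∈ S`, have a common zero in
`K̄^d`; and (2) the family `(q_i)_{i ∈ S}` is algebraically independent over `K`. -/
theorem leinartas_decomposition {K : Type*} [Field K] {d m : ℕ} (hd : 1 ≤ d)
    (f g : MvPolynomial (Fin d) K) (hg : g ≠ 0)
    (c : K) (hc : c ≠ 0)
    (q : Fin m → MvPolynomial (Fin d) K)
    (hq : ∀ i, Irreducible (q i))
    (hqa : ∀ i j, i ≠ j → ¬ Associated (q i) (q j))
    (e : Fin m → ℕ) (he : ∀ i, 1 ≤ e i)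
    (hfact : g = C c * ∏ i, q i ^ e i) :
    ∃ (F : Finset (Fin m) → MvPolynomial (Fin d) K)
      (b : Finset (Fin m) → Fin m → ℕ),
      (∀ S : Finset (Fin m), ∀ i ∈ S, 0 < b S i) ∧
      (toFrac K d f / toFrac K d g
        = ∑ S : Finset (Fin m),
            toFrac K d (F S) / ∏ i ∈ S, toFrac K d (q i) ^ b S i) ∧
      (∀ S : Finset (Fin m), F S ≠ 0 →
        (∃ a : Fin d → AlgebraicClosure K, ∀ i ∈ S, MvPolynomial.aeval a (q i) = 0) ∧
        (¬ AlgebraicallyDependent K (fun i : {i : Fin m // i ∈ S} => q i.1))) := by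
  have hdvd : g ∣ ∏ i, q i ^ e i := hfact ▸ ((hc.isUnit.map C).mul_left_dvd.2 dvd_rfl)
  simpa only [not_algebraicallyDependent_iff, toFrac] using leinartas_decomposition_general
    (AlgebraicClosure K) (FractionRing (MvPolynomial (Fin d) K)) f (fun i ↦ (hq i).ne_zero) hdvd
end

section
/- (Algebraic dependence decomposition step.) Let K be a field, let q_1,…,q_m ∈ K[x_1,…,x_d] be nonzero polynomials such that the family (q_1,…,q_m) is algebraically dependent over K, let e_1,…,e_m ≥ 1 be integers, and let f ∈ K[x_1,…,x_d]. Then in the field of fractions K(x_1,…,x_d), the rational function f / ∏_{i=1}^m q_i^{e_i} can be written as a finite sum Σ_{k=1}^N h_k / ∏_{i∈S_k} q_i^{b_{k,i}}, where each h_k ∈ K[x_1,…,x_d], each b_{k,i} is a positive integer, and each S_k is a proper subset of {1,…,m}. -/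
open MvPolynomial

/-!
Fix a monomial order on the exponent vectors `γ : ι → ℕ` and write `q^γ = ∏ i, q i ^ γ i`. In a
nonzero polynomial relation among the `q i`, let `α` be the least exponent that occurs. Solving
for `q^α` expresses it as a `K`-combination of monomials `q^β` with `α ≺ β`. Dividing by `q^(e + α)`
turns this into an expression of `1 / q^e` through the terms
`q^β / q^(e + α) = q^(β - (e + α)) / q^(e + α - β)` with truncated subtraction. The exponent
`e + α - β` either vanishes at some index, so that a proper subset of the `q i` remains in the
denominator, or is smaller than `e`; well-founded induction on `e` concludes.
-/

section Decomposition

open scoped MonomialOrder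

variable {ι : Type*}

/-- The value `q^γ = ∏ i, q i ^ γ i` at `q` of the monomial with exponent vector `γ`. The exponent
is finitely supported so that monomial orders apply to it. -/
def evalMonomial {M : Type*} [CommMonoid M] (q : ι → M) (γ : ι →₀ ℕ) : M :=
  γ.prod fun i n => q i ^ n

section evalMonomial

variable {M : Type*}

theorem evalMonomial_eq_prod [CommMonoid M] [Fintype ι] (q : ι → M) (γ : ι →₀ ℕ) :
    evalMonomial q γ = ∏ i, q i ^ γ i :=
  γ.prod_pow q

theorem evalMonomial_add [CommMonoid M] (q : ι → M) (γ δ : ι →₀ ℕ) :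
    evalMonomial q (γ + δ) = evalMonomial q γ * evalMonomial q δ :=
  Finsupp.prod_add_index' (fun i => pow_zero (q i)) fun i => pow_add (q i)

theorem map_evalMonomial [CommMonoid M] {N F : Type*} [CommMonoid N] [FunLike F M N]
    [MonoidHomClass F M N] (φ : F) (q : ι → M) (γ : ι →₀ ℕ) :
    φ (evalMonomial q γ) = evalMonomial (φ ∘ q) γ := by
  simp [evalMonomial, map_finsuppProd]

theorem evalMonomial_ne_zero [CommMonoidWithZero M] [NoZeroDivisors M] [Nontrivial M]
    {q : ι → M} (hq : ∀ i, q i ≠ 0) (γ : ι →₀ ℕ) : evalMonomial q γ ≠ 0 :=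
  Finset.prod_ne_zero_iff.mpr fun i _ => pow_ne_zero _ (hq i)

theorem evalMonomial_div_evalMonomial [CommGroupWithZero M] {q : ι → M} (hq : ∀ i, q i ≠ 0)
    (β δ : ι →₀ ℕ) :
    evalMonomial q β / evalMonomial q δ = evalMonomial q (β - δ) / evalMonomial q (δ - β) := by
  have exponents : β + (δ - β) = (β - δ) + δ := by
    ext i
    simp only [Finsupp.add_apply, Finsupp.tsub_apply]
    omega
  rw [div_eq_div_iff (evalMonomial_ne_zero hq δ) (evalMonomial_ne_zero hq (δ - β)),
    ← evalMonomial_add, ← evalMonomial_add, exponents]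

end evalMonomial

theorem exists_apply_eq_zero_or_add_tsub_lt (m : MonomialOrder ι) {α β : ι →₀ ℕ}
    (hαβ : α ≺[m] β) (e : ι →₀ ℕ) :
    (∃ i, (e + α - β) i = 0) ∨ e + α - β ≺[m] e := by
  refine or_iff_not_imp_left.mpr fun hpos => ?_
  push Not at hpos
  have hle : β ≤ e + α := fun i => (Nat.lt_of_sub_ne_zero (hpos i)).le
  have hlt : e + α - β + β ≺[m] e + β := by
    rw [tsub_add_cancel_of_le hle, map_add, map_add]
    gcongr
  rwa [map_add, map_add, add_lt_add_iff_right] at hlt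

theorem exists_evalMonomial_mem_span_of_not_algebraicIndependent (m : MonomialOrder ι)
    {K A : Type*} [Field K] [CommRing A] [Algebra K A] {q : ι → A}
    (hq : ¬ AlgebraicIndependent K q) :
    ∃ α, evalMonomial q α ∈ Submodule.span K (evalMonomial q '' {β | α ≺[m] β}) := by
  classical
  obtain ⟨p, hpq, hp⟩ : ∃ p : MvPolynomial ι K, aeval q p = 0 ∧ p ≠ 0 := by
    simpa [algebraicIndependent_iff] using hq
  obtain ⟨α, hα, hmin⟩ := p.support.exists_min_image m.toSyn (support_nonempty.mpr hp)
  have relation : ∑ β ∈ p.support, p.coeff β • evalMonomial q β = 0 := by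
    simpa only [aeval_def, eval₂_eq, evalMonomial, Finsupp.prod, Algebra.smul_def] using hpq
  refine ⟨α, (Submodule.smul_mem_iff _ (mem_support_iff.mp hα)).mp ?_⟩
  rw [← Finset.add_sum_erase _ _ hα] at relation
  rw [eq_neg_of_add_eq_zero_left relation]
  refine neg_mem (sum_mem fun β hβ => Submodule.smul_mem _ _ (Submodule.subset_span ⟨β, ?_, rfl⟩))
  obtain ⟨hne, hβ⟩ := Finset.mem_erase.mp hβ
  exact (hmin β hβ).lt_of_ne (m.toSyn.injective.ne hne.symm)

section Denominators

variable {A L : Type*} [CommRing A] [Field L] [Algebra A L] {q : ι → A}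

theorem inv_evalMonomial_mem_span_of_evalMonomial_mem_span (m : MonomialOrder ι)
    (hq : ∀ i, algebraMap A L (q i) ≠ 0) {α : ι →₀ ℕ}
    (hα : evalMonomial q α ∈ Ideal.span (evalMonomial q '' {β | α ≺[m] β})) (e : ι →₀ ℕ) :
    (evalMonomial (algebraMap A L ∘ q) e)⁻¹ ∈
      Submodule.span A ((fun γ => (evalMonomial (algebraMap A L ∘ q) γ)⁻¹) ''
        {γ | (∃ i, γ i = 0) ∨ γ ≺[m] e}) := by
  let divide : A →ₗ[A] L :=
    LinearMap.toSpanSingleton A L (evalMonomial (algebraMap A L ∘ q) (e + α))⁻¹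
  have divide_apply (β : ι →₀ ℕ) : divide (evalMonomial q β) =
      evalMonomial (algebraMap A L ∘ q) β / evalMonomial (algebraMap A L ∘ q) (e + α) := by
    simp only [divide, LinearMap.toSpanSingleton_apply, Algebra.smul_def, map_evalMonomial,
      div_eq_mul_inv]
  have divide_α : divide (evalMonomial q α) = (evalMonomial (algebraMap A L ∘ q) e)⁻¹ := by
    rw [divide_apply, evalMonomial_add,
      div_mul_cancel_right₀ (evalMonomial_ne_zero (q := algebraMap A L ∘ q) hq α)]
  rw [← divide_α, ← Submodule.mem_comap]
  refine Submodule.span_le.mpr ?_ hα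
  rintro _ ⟨β, hβ, rfl⟩
  rw [SetLike.mem_coe, Submodule.mem_comap, divide_apply,
    evalMonomial_div_evalMonomial (q := algebraMap A L ∘ q) hq, div_eq_mul_inv,
    ← map_evalMonomial, ← Algebra.smul_def]
  exact Submodule.smul_mem _ _ <| Submodule.subset_span
    ⟨e + α - β, exists_apply_eq_zero_or_add_tsub_lt m hβ e, rfl⟩

theorem inv_evalMonomial_mem_span_of_not_algebraicIndependent {K : Type*} [Field K] [Algebra K A]
    (m : MonomialOrder ι) (hq : ∀ i, algebraMap A L (q i) ≠ 0)
    (hdep : ¬ AlgebraicIndependent K q) (e : ι →₀ ℕ) :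
    (evalMonomial (algebraMap A L ∘ q) e)⁻¹ ∈
      Submodule.span A ((fun γ => (evalMonomial (algebraMap A L ∘ q) γ)⁻¹) ''
        {γ | ∃ i, γ i = 0}) := by
  obtain ⟨α, hα⟩ := exists_evalMonomial_mem_span_of_not_algebraicIndependent m hdep
  induction e using (InvImage.wf m.toSyn wellFounded_lt).induction with
  | _ e ih =>
    refine Submodule.span_le.mpr ?_ (inv_evalMonomial_mem_span_of_evalMonomial_mem_span m hq
      (Submodule.span_subset_span K A _ hα) e)
    rintro _ ⟨γ, hγ | hγ, rfl⟩
    · exact Submodule.subset_span ⟨γ, hγ, rfl⟩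
    · exact ih γ hγ

end Denominators

theorem alg_depend_decomp_step_general [Fintype ι] {K A L : Type*} [Field K] [CommRing A]
    [Algebra K A] [Field L] [Algebra A L] (q : ι → A) (hq : ∀ i, algebraMap A L (q i) ≠ 0)
    (hdep : ¬ AlgebraicIndependent K q) (e : ι → ℕ) (f : A) :
    ∃ (N : ℕ) (h : Fin N → A) (S : Fin N → Finset ι) (b : Fin N → ι → ℕ),
      (∀ k, S k ⊂ Finset.univ) ∧
      (∀ k, ∀ i ∈ S k, 0 < b k i) ∧
      algebraMap A L f / ∏ i, algebraMap A L (q i) ^ e i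
        = ∑ k, algebraMap A L (h k) / ∏ i ∈ S k, algebraMap A L (q i) ^ b k i := by
  let _ : LinearOrder ι := LinearOrder.lift' _ (Fintype.equivFin ι).injective
  have hmem := Submodule.smul_mem _ f (inv_evalMonomial_mem_span_of_not_algebraicIndependent
    MonomialOrder.lex hq hdep (Finsupp.equivFunOnFinite.symm e))
  obtain ⟨N, h, z, hz⟩ := Submodule.mem_span_set'.mp hmem
  choose γ hγ hγz using fun k => (z k).2
  refine ⟨N, h, fun k => (γ k).support, fun k => γ k, fun k => ?_, fun k i hi => ?_, ?_⟩
  · obtain ⟨i, hi⟩ := hγ k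
    exact Finset.ssubset_univ_iff.mpr
      (ne_of_mem_of_not_mem' (Finset.mem_univ i) (Finsupp.notMem_support_iff.mpr hi)).symm
  · exact Nat.pos_of_ne_zero (Finsupp.mem_support_iff.mp hi)
  · simp only [← hγz, Algebra.smul_def, ← div_eq_mul_inv] at hz
    rw [evalMonomial_eq_prod] at hz
    exact hz.symm

theorem AlgebraicallyDependent.not_algebraicIndependent {K : Type*} [Field K] {d : ℕ}
    {q : ι → MvPolynomial (Fin d) K} (hq : AlgebraicallyDependent K q) :
    ¬ AlgebraicIndependent K q := by
  obtain ⟨p, hp, hpq⟩ := hq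
  exact fun hind => hp (hind.eq_zero_of_aeval_eq_zero p hpq)

end Decomposition

/-- **Algebraic dependence decomposition step.** If the nonzero polynomials `q_1,…,q_m` are
algebraically dependent over `K`, `e_i ≥ 1`, and `f ∈ K[x_1,…,x_d]`, then in `K(x_1,…,x_d)`
the rational function `f / ∏ q_i^{e_i}` is a finite sum `∑_k h_k / ∏_{i ∈ S_k} q_i^{b_{k,i}}`
with `h_k ∈ K[x_1,…,x_d]`, `b_{k,i} ≥ 1`, and `S_k ⊊ {1,…,m}` proper subsets. -/
theorem alg_depend_decomp_step {K : Type*} [Field K] {d m : ℕ}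
    (q : Fin m → MvPolynomial (Fin d) K) (hq : ∀ i, q i ≠ 0)
    (hdep : AlgebraicallyDependent K q)
    (e : Fin m → ℕ) (he : ∀ i, 1 ≤ e i) (f : MvPolynomial (Fin d) K) :
    ∃ (N : ℕ) (h : Fin N → MvPolynomial (Fin d) K)
      (S : Fin N → Finset (Fin m)) (b : Fin N → Fin m → ℕ),
      (∀ k, S k ⊂ Finset.univ) ∧
      (∀ k, ∀ i ∈ S k, 0 < b k i) ∧
      toFrac K d f / ∏ i, toFrac K d (q i) ^ e i
        = ∑ k, toFrac K d (h k) / ∏ i ∈ S k, toFrac K d (q i) ^ b k i :=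
  alg_depend_decomp_step_general q (fun i => by simpa using hq i) hdep.not_algebraicIndependent e f
end

section
/- (Existence and uniqueness of the reduced normal form.) Let K be a field, fix a global monomial ordering on K[x_1,…,x_d], and let I ⊆ K[x_1,…,x_d] be an ideal. Then for every f ∈ K[x_1,…,x_d] there exists exactly one polynomial r ∈ K[x_1,…,x_d] such that f − r ∈ I and r is reduced with respect to I. -/
open MvPolynomial

/-- A *global monomial ordering* on `K[x_1,…,x_d]`: a (strict) total ordering on the monomials
`x^α`, `α ∈ ℕ^d` (identified with `Fin d →₀ ℕ`), compatible with multiplication, and satisfying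
`1 < x_i` for every variable `x_i`. -/
structure GlobalMonomialOrder (d : ℕ) where
  lt : (Fin d →₀ ℕ) → (Fin d →₀ ℕ) → Prop
  trichotomous : ∀ a b, lt a b ∨ a = b ∨ lt b a
  irrefl : ∀ a, ¬ lt a a
  trans : ∀ a b c, lt a b → lt b c → lt a c
  add_right : ∀ a b c, lt a b → lt (a + c) (b + c)
  global : ∀ i : Fin d, lt 0 (Finsupp.single i 1)

/-- `μ` is the leading monomial `L(f)` of `f` with respect to the ordering `o`. -/
def IsLeadMonomial {K : Type*} [Field K] {d : ℕ} (o : GlobalMonomialOrder d)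
    (f : MvPolynomial (Fin d) K) (μ : Fin d →₀ ℕ) : Prop :=
  μ ∈ f.support ∧ ∀ ν ∈ f.support, ν ≠ μ → o.lt ν μ

/-- `r` is *reduced* with respect to an ideal `I`: no monomial occurring in `r` is divisible by
the leading monomial of any nonzero element of `I`. -/
def ReducedWrt {K : Type*} [Field K] {d : ℕ} (o : GlobalMonomialOrder d)
    (I : Ideal (MvPolynomial (Fin d) K)) (r : MvPolynomial (Fin d) K) : Prop :=
  ∀ μ ∈ r.support, ∀ h ∈ I, h ≠ 0 → ∀ L, IsLeadMonomial o h L → ¬ L ≤ μ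

/-!
Division with remainder by all nonzero elements of the ideal `I` produces a reduced `r`. If the
difference of two reduced polynomials congruent modulo `I` were nonzero, it would be an element of
`I` whose leading monomial occurs in one of the two. Division terminates because a global ordering
extends divisibility, which by Dickson's lemma is a well-quasi-order on monomials, so the ordering
is a well-order.
-/

theorem monotone_of_single_one_nonneg {σ M : Type*} [AddCommMonoid M] [Preorder M]
    [IsOrderedAddMonoid M] (φ : (σ →₀ ℕ) →+ M) (hφ : ∀ i, 0 ≤ φ (Finsupp.single i 1)) :
    Monotone φ := by
  have hnonneg (c : σ →₀ ℕ) : 0 ≤ φ c := by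
    induction c using Finsupp.induction_linear with
    | zero => exact (map_zero φ).ge
    | add a b ha hb => simpa only [map_add] using add_nonneg ha hb
    | single i n =>
      simpa only [← map_nsmul, Finsupp.smul_single, smul_eq_mul, mul_one]
        using nsmul_nonneg (hφ i) n
  intro a b hab
  obtain ⟨c, rfl⟩ := exists_add_of_le hab
  simpa only [map_add] using le_add_of_nonneg_right (hnonneg c)

section ReducedModulo

variable {σ : Type*}

/-- The analogue of `ReducedWrt` for Mathlib's monomial orders, in any set of variables: no monomial
of `r` is divisible by the leading monomial of a nonzero element of `I`. In Mathlib the exponent of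
the leading monomial of `h` is `m.degree h`, with value `0` at `h = 0`. -/
def IsReducedModulo {R : Type*} [CommSemiring R] (m : MonomialOrder σ)
    (I : Ideal (MvPolynomial σ R)) (r : MvPolynomial σ R) : Prop :=
  ∀ μ ∈ r.support, ∀ h ∈ I, h ≠ 0 → ¬ m.degree h ≤ μ

theorem IsReducedModulo.eq_of_sub_mem {R : Type*} [CommRing R] {m : MonomialOrder σ}
    {I : Ideal (MvPolynomial σ R)} {r s : MvPolynomial σ R} (hr : IsReducedModulo m I r)
    (hs : IsReducedModulo m I s) (hrs : r - s ∈ I) : r = s := by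
  classical
  by_contra hne
  have hsub : r - s ≠ 0 := sub_ne_zero.2 hne
  rcases Finset.mem_union.1 (support_sub σ r s (m.degree_mem_support hsub)) with hmem | hmem
  · exact hr _ hmem _ hrs hsub le_rfl
  · exact hs _ hmem _ hrs hsub le_rfl

theorem exists_sub_mem_isReducedModulo {K : Type*} [Field K] (m : MonomialOrder σ)
    (I : Ideal (MvPolynomial σ K)) (f : MvPolynomial σ K) :
    ∃ r, f - r ∈ I ∧ IsReducedModulo m I r := by
  obtain ⟨g, r, hf, -, hr⟩ := m.div_set (B := {b | b ∈ I ∧ b ≠ 0})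
    (fun b hb ↦ (m.leadingCoeff_ne_zero_iff.2 hb.2).isUnit) f
  refine ⟨r, ?_, fun μ hμ h hI h0 ↦ hr μ hμ h ⟨hI, h0⟩⟩
  rw [hf, add_sub_cancel_right, Finsupp.linearCombination_apply]
  exact I.sum_mem fun b _ ↦ I.mul_mem_left _ b.2.1

theorem existsUnique_reduced_normal_form_general {K : Type*} [Field K] (m : MonomialOrder σ)
    (I : Ideal (MvPolynomial σ K)) (f : MvPolynomial σ K) :
    ∃! r, f - r ∈ I ∧ IsReducedModulo m I r := by
  obtain ⟨r, hfr, hr⟩ := exists_sub_mem_isReducedModulo m I f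
  refine ⟨r, ⟨hfr, hr⟩, fun s ⟨hfs, hs⟩ ↦ hs.eq_of_sub_mem hr ?_⟩
  simpa only [sub_sub_sub_cancel_left] using I.sub_mem hfr hfs

end ReducedModulo

namespace GlobalMonomialOrder

variable {d : ℕ} (o : GlobalMonomialOrder d)

/-- The exponents `ℕ^d` ordered by `o`. A type synonym, since `Fin d →₀ ℕ` already carries the
componentwise order, which is divisibility of monomials. -/
def Syn (_ : GlobalMonomialOrder d) : Type := Fin d →₀ ℕ

noncomputable instance : AddCommMonoid o.Syn := inferInstanceAs (AddCommMonoid (Fin d →₀ ℕ))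

instance : IsStrictTotalOrder o.Syn o.lt where
  trichotomous a b hab hba := ((o.trichotomous a b).resolve_left hab).resolve_right hba
  irrefl := o.irrefl
  trans := o.trans

noncomputable instance : LinearOrder o.Syn :=
  letI := Classical.decRel (α := o.Syn) o.lt
  linearOrderOfSTO (α := o.Syn) o.lt

instance : IsOrderedAddMonoid o.Syn where
  add_le_add_left a b hab c := by
    rcases hab.eq_or_lt with rfl | hlt
    · exact le_rfl
    · exact le_of_lt (o.add_right a b c hlt)

/-- The identity from `ℕ^d` to its copy ordered by `o`. -/
noncomputable def toSyn : (Fin d →₀ ℕ) ≃+ o.Syn := AddEquiv.refl _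

theorem monotone_toSyn : Monotone o.toSyn :=
  monotone_of_single_one_nonneg o.toSyn.toAddMonoidHom fun i ↦ le_of_lt (o.global i)

instance : WellFoundedLT o.Syn :=
  have := o.monotone_toSyn.wellQuasiOrderedLE_of_wellQuasiOrderedLE_of_surjective
    o.toSyn.surjective
  inferInstance

/-- A global monomial ordering as a monomial order in the sense of Mathlib. -/
noncomputable def toMonomialOrder : MonomialOrder (Fin d) where
  syn := o.Syn
  toSyn := o.toSyn
  toSyn_monotone := o.monotone_toSyn

theorem toMonomialOrder_lt_iff {a b : Fin d →₀ ℕ} :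
    o.toMonomialOrder.toSyn a < o.toMonomialOrder.toSyn b ↔ o.lt a b :=
  Iff.rfl

variable {K : Type*} [Field K]

theorem isLeadMonomial_degree {f : MvPolynomial (Fin d) K} (hf : f ≠ 0) :
    IsLeadMonomial o f (o.toMonomialOrder.degree f) :=
  ⟨o.toMonomialOrder.degree_mem_support hf, fun _ hν hne ↦ o.toMonomialOrder_lt_iff.1 <|
    (o.toMonomialOrder.le_degree hν).lt_of_ne (o.toMonomialOrder.toSyn.injective.ne hne)⟩

theorem degree_eq_of_isLeadMonomial {f : MvPolynomial (Fin d) K} {μ : Fin d →₀ ℕ}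
    (hμ : IsLeadMonomial o f μ) : o.toMonomialOrder.degree f = μ := by
  by_contra hne
  have hf : f ≠ 0 := support_nonempty.1 ⟨μ, hμ.1⟩
  have hlt := hμ.2 _ (o.toMonomialOrder.degree_mem_support hf) hne
  exact (o.toMonomialOrder.le_degree hμ.1).not_gt (o.toMonomialOrder_lt_iff.2 hlt)

theorem isReducedModulo_iff_reducedWrt {I : Ideal (MvPolynomial (Fin d) K)}
    {r : MvPolynomial (Fin d) K} :
    IsReducedModulo o.toMonomialOrder I r ↔ ReducedWrt o I r := by
  refine forall₂_congr fun μ _ ↦ forall₃_congr fun h _ h0 ↦ ⟨fun hr L hL ↦ ?_, fun hr ↦ ?_⟩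
  · rwa [← o.degree_eq_of_isLeadMonomial hL]
  · exact hr _ (o.isLeadMonomial_degree h0)

end GlobalMonomialOrder

/-- **Existence and uniqueness of the reduced normal form.** Given a global monomial ordering
on `K[x_1,…,x_d]` and an ideal `I`, every polynomial `f` has exactly one normal form: a
polynomial `r` with `f − r ∈ I` which is reduced with respect to `I`. -/
theorem existsUnique_reduced_normal_form {K : Type*} [Field K] {d : ℕ}
    (o : GlobalMonomialOrder d) (I : Ideal (MvPolynomial (Fin d) K))
    (f : MvPolynomial (Fin d) K) :
    ∃! r : MvPolynomial (Fin d) K, f - r ∈ I ∧ ReducedWrt o I r := by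
  simpa only [o.isReducedModulo_iff_reducedWrt] using
    existsUnique_reduced_normal_form_general o.toMonomialOrder I f
end

section
/- (Termination of the simplified algebraic-dependence decomposition.) Let m ≥ 1, let α ∈ ℕ^m, and let B ⊆ ℕ^m be a finite set with α ∉ B such that: every β ∈ B satisfies |β| ≥ |α|, and every β ∈ B with |β| = |α| admits an index k ∈ {1,…,m} with β_k < α_k and β_i = α_i for all i > k (i.e., the monomial with exponent α is minimal with respect to the graded reverse lexicographic order among the exponents in {α} ∪ B). Then there is no infinite sequence e^{(1)}, e^{(2)}, e^{(3)}, … of vectors in ℕ^m, all of whose coordinates are strictly positive, such that for every i ≥ 1 there exists β ∈ B with e^{(i+1)}_l = α_l + e^{(i)}_l − β_l for all l ∈ {1,…,m}. -/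
/-!
A step `e' + β = α + e` shifts `α` and `β` by the common vector `e - β ∈ ℤ^ι` to `e'` and `e`. Since
`α` precedes `β` in the graded reverse lexicographic order, which is invariant under translation,
`e'` precedes `e`. That order is well-founded, because it compares degrees first and only finitely
many exponent vectors share a degree, so the steps cannot go on forever.
-/

section Grevlex

variable {ι : Type*} [Fintype ι]

/-- The strict graded reverse lexicographic order on exponent vectors: `GrevlexLT a b` means that
`a` precedes `b`. When degrees agree, `k` is the last index at which `a` and `b` differ, and the
vector with the larger entry there is the smaller one. -/
def GrevlexLT [LT ι] (a b : ι → ℕ) : Prop :=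
  ∑ i, a i < ∑ i, b i ∨
    ∑ i, a i = ∑ i, b i ∧ ∃ k, b k < a k ∧ ∀ i, k < i → b i = a i

theorem GrevlexLT.of_add_eq_add [LT ι] {a b c d : ι → ℕ} (hab : GrevlexLT a b)
    (h : c + b = a + d) : GrevlexLT c d := by
  have entry (i : ι) : c i + b i = a i + d i := congrFun h i
  have degree : ∑ i, c i + ∑ i, b i = ∑ i, a i + ∑ i, d i := by
    simp only [← Finset.sum_add_distrib, entry]
  rcases hab with hlt | ⟨heq, k, hk, above⟩
  · exact .inl (by omega)
  · refine .inr ⟨by omega, k, ?_, fun i hi ↦ ?_⟩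
    · have := entry k
      omega
    · have := entry i
      have := above i hi
      omega

theorem finite_setOf_sum_eq (n : ℕ) : {a : ι → ℕ | ∑ i, a i = n}.Finite := by
  classical
  exact (Finset.univ.piAntidiag n).finite_toSet.subset fun a ha ↦ by simpa using ha

theorem wellFounded_grevlexLT [LinearOrder ι] : WellFounded (GrevlexLT (ι := ι)) := by
  let degree (a : ι → ℕ) : ℕ := ∑ i, a i
  let revLex (a : ι → ℕ) : Colex (ι → ℕᵒᵈ) := toColex fun i ↦ OrderDual.toDual (a i)
  have revLex_wf (n : ℕ) : (degree ⁻¹' {n}).WellFoundedOn (fun a b ↦ revLex a < revLex b) :=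
    Set.wellFoundedOn_image.1 ((finite_setOf_sum_eq n).image revLex).wellFoundedOn
  refine (WellFounded.prod_lex_of_wellFoundedOn_fiber
    (wellFounded_lt.onFun (f := degree)) revLex_wf).mono fun a b hab ↦ Prod.lex_def.2 ?_
  exact hab.imp_right <| And.imp_right fun ⟨k, hk, above⟩ ↦
    ⟨k, fun i hi ↦ congrArg OrderDual.toDual (above i hi).symm, hk⟩

end Grevlex

theorem simplified_algdep_termination_general {ι : Type*} [Fintype ι] [LinearOrder ι]
    (α : ι → ℕ) (B : Set (ι → ℕ))
    (hdeg : ∀ β ∈ B, (∑ i, α i) ≤ ∑ i, β i)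
    (hgrevlex : ∀ β ∈ B, (∑ i, β i) = (∑ i, α i) →
      ∃ k : ι, β k < α k ∧ ∀ i : ι, k < i → β i = α i) :
    ¬ ∃ e : ℕ → (ι → ℕ), ∀ n, ∃ β ∈ B, ∀ l, e (n + 1) l + β l = α l + e n l := by
  rintro ⟨e, hstep⟩
  have α_lt {β : ι → ℕ} (hβ : β ∈ B) : GrevlexLT α β :=
    (hdeg β hβ).lt_or_eq.imp_right fun heq ↦ ⟨heq, hgrevlex β hβ heq.symm⟩
  have descending (n : ℕ) : GrevlexLT (e (n + 1)) (e n) :=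
    let ⟨_, hβ, h⟩ := hstep n
    (α_lt hβ).of_add_eq_add (funext h)
  exact (wellFounded_iff_isEmpty_descending_chain.1 wellFounded_grevlexLT).false ⟨e, descending⟩

/-- **Termination of the simplified algebraic-dependence decomposition.** Let `m ≥ 1`,
`α ∈ ℕ^m`, and let `B ⊆ ℕ^m` be a finite set with `α ∉ B` such that every `β ∈ B` satisfies
`|β| ≥ |α|`, and every `β ∈ B` with `|β| = |α|` admits an index `k` with `β_k < α_k` and
`β_i = α_i` for all `i > k` (i.e. `α` is grevlex-minimal in `{α} ∪ B`).  Then there is no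
infinite sequence `e⁽¹⁾, e⁽²⁾, …` of vectors in `ℕ^m` with all coordinates strictly positive
such that for each `i` there is `β ∈ B` with `e⁽ⁱ⁺¹⁾_l = α_l + e⁽ⁱ⁾_l − β_l` for all `l`. -/
theorem simplified_algdep_termination {m : ℕ} (hm : 1 ≤ m)
    (α : Fin m → ℕ) (B : Finset (Fin m → ℕ)) (hαB : α ∉ B)
    (hdeg : ∀ β ∈ B, (∑ i, α i) ≤ ∑ i, β i)
    (hgrevlex : ∀ β ∈ B, (∑ i, β i) = (∑ i, α i) →
      ∃ k : Fin m, β k < α k ∧ ∀ i : Fin m, k < i → β i = α i) :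
    ¬ ∃ e : ℕ → (Fin m → ℕ),
        (∀ n l, 0 < e n l) ∧
        (∀ n, ∃ β ∈ B, ∀ l, e (n + 1) l + β l = α l + e n l) := by
  rintro ⟨e, -, hstep⟩
  exact simplified_algdep_termination_general α B hdeg hgrevlex ⟨e, hstep⟩
end
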